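/- arXiv:2509.17739 — 3 statements merged into one kernel-verified Lean document; each statement's English description precedes it below -/
import Mathlib

section
/- Let S = (X, X₀, f) be a δ-GAS transition system with X ⊂ ℝⁿ compact and X₀ = X, and let ε : X × X → ℝ_{>0} be a continuous resolution function (hence attaining a strictly positive global minimum on the compact set X × X), with resolution relation R̄ = {(x,x̂) ∈ X × X : d(x,x̂) ≤ ε(x,x̂)}. Then there exist a deterministic abstraction Ŝ of S and a relation R ⊆ X × X̂ which is a multi-resolution approximate bisimulation between S and Ŝ with resolution R̄; that is, 𝒲_S(R̄) ≠ ∅. -/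
/-!
On a bounded set, δ-GAS provides a horizon `N` at which any two orbits are within `η / 2` of each
other. It also makes `f` uniformly continuous, and uniform continuity alone makes every sufficiently
fine pseudo-orbit follow the true orbit of a nearby point within `η / 2` up to time `N`. At a later
time `m + N`, restart the true dynamics from the point that the pseudo-orbit occupies at time `m`:
over the last `N` steps the restarted orbit is `η / 2`-close to the pseudo-orbit by shadowing and to
the original orbit by contraction, so errors never accumulate. The orbits of the abstraction are
pseudo-orbits whose error is the mesh of the quantiser, so a fine enough quantiser keeps every pair
of related states below the minimum of the resolution function.
-/

/-- A function `β : ℝ≥0 × ℝ≥0 → ℝ≥0` is of class 𝒦ℒ. -/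
def IsClassKL (β : ℝ → ℝ → ℝ) : Prop :=
  (∀ t ≥ (0 : ℝ), ContinuousOn (fun s => β s t) (Set.Ici 0) ∧
      StrictMonoOn (fun s => β s t) (Set.Ici 0) ∧ β 0 t = 0) ∧
  (∀ s ≥ (0 : ℝ), Filter.Tendsto (fun t => β s t) Filter.atTop (nhds 0))

open Filter Set Topology

namespace IsClassKL

variable {E F : Type*} [PseudoMetricSpace E] [PseudoMetricSpace F] {X : Set E} {β : ℝ → ℝ → ℝ}

theorem uniformContinuousOn (hβ : IsClassKL β) {g : E → F} {t : ℝ} (ht : 0 ≤ t)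
    (hg : ∀ x ∈ X, ∀ y ∈ X, dist (g x) (g y) ≤ β (dist x y) t) : UniformContinuousOn g X := by
  obtain ⟨hcont, -, hzero⟩ := hβ.1 t ht
  refine Metric.uniformContinuousOn_iff.2 fun η hη => ?_
  obtain ⟨δ, hδ, hβδ⟩ := Metric.continuousOn_iff.1 hcont 0 self_mem_Ici η hη
  refine ⟨δ, hδ, fun x hx y hy hxy => (hg x hx y hy).trans_lt ?_⟩
  have hβη : dist (β (dist x y) t) (β 0 t) < η :=
    hβδ _ dist_nonneg (by simpa only [Real.dist_0_eq_abs, abs_dist] using hxy)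
  rw [hzero, Real.dist_0_eq_abs] at hβη
  exact lt_of_abs_lt hβη

theorem exists_forall_dist_le (hβ : IsClassKL β) (hX : Bornology.IsBounded X) {g : ℕ → E → F}
    (hg : ∀ x ∈ X, ∀ y ∈ X, ∀ k : ℕ, dist (g k x) (g k y) ≤ β (dist x y) k) {η : ℝ} (hη : 0 < η) :
    ∃ N, ∀ x ∈ X, ∀ y ∈ X, dist (g N x) (g N y) ≤ η := by
  have hlim : Tendsto (fun k : ℕ => β (Metric.diam X) k) atTop (𝓝 0) :=
    (hβ.2 _ Metric.diam_nonneg).comp tendsto_natCast_atTop_atTop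
  obtain ⟨N, hN⟩ := (hlim.eventually_le_const hη).exists
  have hmono : MonotoneOn (fun s => β s N) (Ici 0) := (hβ.1 N N.cast_nonneg).2.1.monotoneOn
  refine ⟨N, fun x hx y hy => ?_⟩
  calc dist (g N x) (g N y) ≤ β (dist x y) N := hg x hx y hy N
    _ ≤ β (Metric.diam X) N :=
      hmono dist_nonneg Metric.diam_nonneg (Metric.dist_le_diam_of_mem hX hx hy)
    _ ≤ η := hN

end IsClassKL

section PseudoOrbit

variable {E : Type*} [PseudoMetricSpace E] {X : Set E} {f : E → E} {δ : ℝ} {y : ℕ → E}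

/-- `y` is a `δ`-pseudo-orbit of `f` in `X`: it stays in `X` and follows `f` up to an error of at
most `δ` at each step. The orbits of an abstraction are regarded as pseudo-orbits of the system. -/
def IsPseudoOrbitOn (f : E → E) (X : Set E) (δ : ℝ) (y : ℕ → E) : Prop :=
  ∀ k, y k ∈ X ∧ dist (f (y k)) (y (k + 1)) ≤ δ

theorem IsPseudoOrbitOn.shift (hy : IsPseudoOrbitOn f X δ y) (m : ℕ) :
    IsPseudoOrbitOn f X δ fun k => y (m + k) :=
  fun k => hy (m + k)

theorem isPseudoOrbitOn_iterate_comp {κ : E → E} (hf : MapsTo f X X) (hκ : MapsTo κ X X)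
    (hδ : ∀ x ∈ X, dist x (κ x) ≤ δ) {x : E} (hx : x ∈ X) :
    IsPseudoOrbitOn f X δ fun k => (κ ∘ f)^[k] x := by
  intro k
  have hk : (κ ∘ f)^[k] x ∈ X := (hκ.comp hf).iterate k hx
  refine ⟨hk, ?_⟩
  simpa only [Function.iterate_succ_apply', Function.comp_apply] using hδ _ (hf hk)

theorem eventually_shadowing_at (hf : MapsTo f X X) (hfc : UniformContinuousOn f X)
    (k : ℕ) {η : ℝ} (hη : 0 < η) :
    ∀ᶠ δ in 𝓝[>] 0, ∀ y, IsPseudoOrbitOn f X δ y → ∀ x ∈ X, dist x (y 0) ≤ δ →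
      dist (f^[k] x) (y k) ≤ η := by
  induction k generalizing η with
  | zero =>
    filter_upwards [Ioc_mem_nhdsGT hη] with δ hδ y _ x _ hxy
    exact hxy.trans hδ.2
  | succ k ih =>
    obtain ⟨ρ, hρ, hfρ⟩ := Metric.uniformContinuousOn_iff_le.1 hfc (η / 2) (half_pos hη)
    filter_upwards [ih hρ, Ioc_mem_nhdsGT (half_pos hη)] with δ hshadow hδ y hy x hx hxy
    rw [Function.iterate_succ_apply']
    calc dist (f (f^[k] x)) (y (k + 1))
        ≤ dist (f (f^[k] x)) (f (y k)) + dist (f (y k)) (y (k + 1)) := dist_triangle ..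
      _ ≤ η / 2 + η / 2 :=
        add_le_add (hfρ _ (hf.iterate k hx) _ (hy k).1 (hshadow y hy x hx hxy))
          ((hy k).2.trans hδ.2)
      _ = η := add_halves η

theorem eventually_shadowing (hf : MapsTo f X X)
    (hfc : UniformContinuousOn f X) {η : ℝ} (hη : 0 < η) {N : ℕ}
    (hN : ∀ x ∈ X, ∀ y ∈ X, dist (f^[N] x) (f^[N] y) ≤ η / 2) :
    ∀ᶠ δ in 𝓝[>] 0, ∀ y, IsPseudoOrbitOn f X δ y → ∀ x ∈ X, dist x (y 0) ≤ δ →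
      ∀ k, dist (f^[k] x) (y k) ≤ η := by
  have hshort := (finite_Iic N).eventually_all.2 fun k _ =>
    eventually_shadowing_at hf hfc k (half_pos hη)
  filter_upwards [hshort, self_mem_nhdsWithin] with δ hshadow hδ y hy x hx hxy k
  obtain hk | hk := le_total k N
  · exact (hshadow k hk y hy x hx hxy).trans (half_le_self hη.le)
  · obtain ⟨m, rfl⟩ := Nat.exists_eq_add_of_le' hk
    have hrestart : dist (f^[N] (y m)) (y (m + N)) ≤ η / 2 :=
      hshadow N self_mem_Iic _ (hy.shift m) (y m) (hy m).1 ((dist_self _).trans_le (le_of_lt hδ))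
    calc dist (f^[m + N] x) (y (m + N))
        = dist (f^[N] (f^[m] x)) (y (m + N)) := by rw [add_comm, Function.iterate_add_apply]
      _ ≤ dist (f^[N] (f^[m] x)) (f^[N] (y m)) + dist (f^[N] (y m)) (y (m + N)) :=
        dist_triangle ..
      _ ≤ η / 2 + η / 2 := add_le_add (hN _ (hf.iterate m hx) _ (hy m).1) hrestart
      _ = η := add_halves η

theorem exists_quantiser_of_totallyBounded (hX : TotallyBounded X) (hδ : 0 < δ) :
    ∃ κ : E → E, MapsTo κ X X ∧ (κ '' X).Finite ∧ ∀ x ∈ X, dist x (κ x) ≤ δ := by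
  obtain ⟨t, htX, htfin, hcover⟩ := Metric.finite_approx_of_totallyBounded hX δ hδ
  have hnear : ∀ x ∈ X, ∃ y ∈ t, dist x y < δ := fun x hx => by
    simpa only [mem_iUnion₂, Metric.mem_ball, exists_prop] using hcover hx
  choose! κ hκt hκδ using hnear
  exact ⟨κ, fun x hx => htX (hκt x hx), htfin.subset (image_subset_iff.2 hκt),
    fun x hx => (hκδ x hx).le⟩

end PseudoOrbit

section JointOrbit

variable {α γ : Type*} {X : Set α} {f : α → α} {g : γ → γ} {κ : α → γ}

/-- The forward orbit of the graph of `κ` over `X` under the product dynamics of `f` and `g`. When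
`g` is the transition function of the abstraction, this is the least relation that pairs every
initial state with its quantisation and is closed under simultaneous transitions. -/
def jointOrbit (f : α → α) (g : γ → γ) (κ : α → γ) (X : Set α) : Set (α × γ) :=
  {p | ∃ x ∈ X, ∃ k : ℕ, (f^[k] x, g^[k] (κ x)) = p}

theorem mk_mem_jointOrbit {x : α} (hx : x ∈ X) : (x, κ x) ∈ jointOrbit f g κ X :=
  ⟨x, hx, 0, rfl⟩

theorem map_mem_jointOrbit {p : α × γ} (hp : p ∈ jointOrbit f g κ X) :
    (f p.1, g p.2) ∈ jointOrbit f g κ X := by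
  obtain ⟨x, hx, k, rfl⟩ := hp
  exact ⟨x, hx, k + 1, by simp only [Function.iterate_succ_apply']⟩

theorem jointOrbit_subset_prod {Y : Set γ} (hf : MapsTo f X X) (hg : MapsTo g Y Y)
    (hκ : MapsTo κ X Y) : jointOrbit f g κ X ⊆ X ×ˢ Y := by
  rintro _ ⟨x, hx, k, rfl⟩
  exact ⟨hf.iterate k hx, hg.iterate k (hκ hx)⟩

end JointOrbit

theorem exists_quantiser_forall_jointOrbit_dist_le {E : Type*} [PseudoMetricSpace E] {X : Set E}
    {f : E → E} (hX : TotallyBounded X) (hf : MapsTo f X X) (hfc : UniformContinuousOn f X)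
    {η : ℝ} (hη : 0 < η) {N : ℕ}
    (hN : ∀ x ∈ X, ∀ y ∈ X, dist (f^[N] x) (f^[N] y) ≤ η / 2) :
    ∃ κ : E → E, MapsTo κ X X ∧ (κ '' X).Finite ∧
      ∀ p ∈ jointOrbit f (κ ∘ f) κ X, dist p.1 p.2 ≤ η := by
  obtain ⟨δ, hshadow, hδ⟩ :=
    ((eventually_shadowing hf hfc hη hN).and self_mem_nhdsWithin).exists
  obtain ⟨κ, hκX, hκfin, hκδ⟩ := exists_quantiser_of_totallyBounded hX hδ
  refine ⟨κ, hκX, hκfin, ?_⟩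
  rintro _ ⟨x, hx, k, rfl⟩
  exact hshadow _ (isPseudoOrbitOn_iterate_comp hf hκX hκδ (hκX hx)) x hx (hκδ x hx) k

theorem stmt3_general {E : Type*} [PseudoMetricSpace E] {X : Set E} {f : E → E}
    (hX : TotallyBounded X) (hf : MapsTo f X X) (hfc : UniformContinuousOn f X)
    (hcontr : ∀ η > 0, ∃ N, ∀ x ∈ X, ∀ y ∈ X, dist (f^[N] x) (f^[N] y) ≤ η)
    {ε : E → E → ℝ} (hε : ∃ η > 0, ∀ p ∈ X ×ˢ X, η ≤ ε p.1 p.2) :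
    ∃ Xhat ⊆ X, Xhat.Finite ∧
      ∃ κ : E → E, (∀ x ∈ X, κ x ∈ Xhat) ∧ (∀ y ∈ Xhat, ∃ x ∈ X, κ x = y) ∧
        ∃ ghat : E → E, (∀ y ∈ Xhat, ghat y = κ (f y)) ∧
          ∃ R : Set (E × E),
            R ⊆ X ×ˢ Xhat ∧
            (∀ x ∈ X, ∃ y ∈ κ '' X, (x, y) ∈ R) ∧
            (∀ y ∈ κ '' X, ∃ x ∈ X, (x, y) ∈ R) ∧
            (∀ p ∈ R, (f p.1, ghat p.2) ∈ R) ∧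
            (∀ p ∈ R, dist p.1 p.2 ≤ ε p.1 p.2) := by
  obtain ⟨η, hη, hηε⟩ := hε
  obtain ⟨N, hN⟩ := hcontr _ (half_pos hη)
  obtain ⟨κ, hκX, hκfin, hclose⟩ :=
    exists_quantiser_forall_jointOrbit_dist_le hX hf hfc hη hN
  have himage : κ '' X ⊆ X := hκX.image_subset
  have hghat : MapsTo (κ ∘ f) (κ '' X) (κ '' X) :=
    fun y hy => mem_image_of_mem κ (hf (himage hy))
  have hsub : jointOrbit f (κ ∘ f) κ X ⊆ X ×ˢ (κ '' X) :=
    jointOrbit_subset_prod hf hghat (mapsTo_image κ X)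
  refine ⟨κ '' X, himage, hκfin, κ, mapsTo_image κ X, fun y hy => hy, κ ∘ f, fun y _ => rfl,
    jointOrbit f (κ ∘ f) κ X, hsub, ?_, ?_, fun p hp => map_mem_jointOrbit hp, ?_⟩
  · exact fun x hx => ⟨κ x, mem_image_of_mem κ hx, mk_mem_jointOrbit hx⟩
  · rintro _ ⟨x, hx, rfl⟩
    exact ⟨x, hx, mk_mem_jointOrbit hx⟩
  · exact fun p hp => (hclose p hp).trans (hηε p (prod_mono_right himage (hsub hp)))

/-- For a δ-GAS system `S = (X, X, f)` on a compact `X ⊂ ℝⁿ` and any continuous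
positive resolution function `ε : X × X → ℝ_{>0}`, with resolution relation
`R̄ = {(x,x̂) ∈ X × X : dist x x̂ ≤ ε x x̂}`, there exist a deterministic abstraction `Ŝ` of `S`
and a multi-resolution approximate bisimulation `R` between `S` and `Ŝ` with resolution `R̄`;
i.e. `𝒲_S(R̄) ≠ ∅`. -/
theorem stmt3 (n : ℕ)
    (X : Set (EuclideanSpace ℝ (Fin n)))
    (f : EuclideanSpace ℝ (Fin n) → EuclideanSpace ℝ (Fin n))
    (hXcomp : IsCompact X) (hXne : X.Nonempty) (hf : Set.MapsTo f X X)
    (β : ℝ → ℝ → ℝ) (hβ : IsClassKL β)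
    (hGAS : ∀ x ∈ X, ∀ x' ∈ X, ∀ k : ℕ,
      dist (f^[k] x) (f^[k] x') ≤ β (dist x x') (k : ℝ))
    (ε : EuclideanSpace ℝ (Fin n) → EuclideanSpace ℝ (Fin n) → ℝ)
    (hεpos : ∀ x ∈ X, ∀ y ∈ X, 0 < ε x y)
    (hεcont : ContinuousOn (fun p : EuclideanSpace ℝ (Fin n) × EuclideanSpace ℝ (Fin n) =>
      ε p.1 p.2) (X ×ˢ X)) :
    ∃ Xhat : Set (EuclideanSpace ℝ (Fin n)), Xhat ⊆ X ∧ Xhat.Finite ∧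
      ∃ κ : EuclideanSpace ℝ (Fin n) → EuclideanSpace ℝ (Fin n),
        (∀ x ∈ X, κ x ∈ Xhat) ∧ (∀ y ∈ Xhat, ∃ x ∈ X, κ x = y) ∧
        ∃ ghat : EuclideanSpace ℝ (Fin n) → EuclideanSpace ℝ (Fin n),
          (∀ y ∈ Xhat, ghat y = κ (f y)) ∧
          ∃ R : Set (EuclideanSpace ℝ (Fin n) × EuclideanSpace ℝ (Fin n)),
            R ⊆ X ×ˢ Xhat ∧
            (∀ x ∈ X, ∃ y ∈ κ '' X, (x, y) ∈ R) ∧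
            (∀ y ∈ κ '' X, ∃ x ∈ X, (x, y) ∈ R) ∧
            (∀ p ∈ R, (f p.1, ghat p.2) ∈ R) ∧
            (∀ p ∈ R, dist p.1 p.2 ≤ ε p.1 p.2) :=
  stmt3_general hXcomp.totallyBounded hf
    (hβ.uniformContinuousOn zero_le_one (by simpa using fun x hx y hy => hGAS x hx y hy 1))
    (fun _ hη => hβ.exists_forall_dist_le hXcomp.isBounded hGAS hη)
    ((hXcomp.prod hXcomp).exists_forall_le' hεcont fun p hp => hεpos p.1 hp.1 p.2 hp.2)
end

section
/- Let S = (X, X₀, f) be a δ-UB transition system with X ⊂ ℝⁿ compact and X₀ = X, and suppose f has an asymptotically stable equilibrium x* ∈ X such that X is contained in the region of attraction of x* (fᵏ(x) → x* as k → ∞ for every x ∈ X). Then for every continuous resolution function ε : X × X → ℝ_{>0}, with resolution relation R̄ = {(x,x̂) ∈ X × X : d(x,x̂) ≤ ε(x,x̂)}, there exist a finite-state deterministic abstraction Ŝ of S and a relation R ⊆ X × X̂ which is a multi-resolution approximate bisimulation between S and Ŝ with resolution R̄; that is, 𝒲_S(R̄) ≠ ∅. -/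
/-- A function `α : ℝ≥0 → ℝ≥0` is of class 𝒦 if it is continuous, strictly increasing and
`α 0 = 0`. -/
def IsClassK (α : ℝ → ℝ) : Prop :=
  ContinuousOn α (Set.Ici 0) ∧ StrictMonoOn α (Set.Ici 0) ∧ α 0 = 0

/-!
Call `x` and `y` orbit-close up to `η` if `f^[j] x` and `f^[j] y` stay within `η` of each other for
all `j`. This relation is preserved by `f`, and equicontinuity of the iterates gives a finite net
for it, so quantizing to the net adds an error of `η` per step. Uniform attraction puts every
trajectory near `x*` after a fixed number `N` of steps; choosing `(N + 1) * η` small, the abstract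
trajectory gets near `x*` before the accumulated error becomes visible. The quantizer sends states
whose whole orbit is near `x*` to `x*` itself, which freezes the abstract trajectory there, and from
then on no further error accumulates.
-/

open Filter Function Set Topology

section Bisimulation

variable {A B : Type*}

/-- `κ` is a quantizer of the state space `X`, defining a finite deterministic abstraction of a
system `(X, X, f)`: its states are `κ '' X`, all of them initial, and its transition function is
`κ ∘ f`. -/
structure IsFiniteQuantizer (X : Set A) (κ : A → A) : Prop where
  mapsTo : MapsTo κ X X
  finite_image : (κ '' X).Finite

/-- `R` is a multi-resolution approximate bisimulation with resolution `Rbar` between the systems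
`(X, X, f)` and `(Y, Y, g)`, in which every state is initial. -/
structure IsMultiresolutionBisimulation (f : A → A) (X : Set A) (g : B → B) (Y : Set B)
    (R Rbar : Set (A × B)) : Prop where
  subset_prod : R ⊆ X ×ˢ Y
  exists_right : ∀ x ∈ X, ∃ y ∈ Y, (x, y) ∈ R
  exists_left : ∀ y ∈ Y, ∃ x ∈ X, (x, y) ∈ R
  map_mem : ∀ p ∈ R, (f p.1, g p.2) ∈ R
  subset_resolution : R ⊆ Rbar

/-- The relation traced out by running `f` from each `x ∈ X` and `g` from `κ x` in parallel: the
smallest one that contains the graph of `κ` on `X` and is preserved by the two dynamics. -/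
def parallelOrbits (f : A → A) (X : Set A) (g : B → B) (κ : A → B) : Set (A × B) :=
  {p | ∃ x ∈ X, ∃ k : ℕ, (f^[k] x, g^[k] (κ x)) = p}

theorem isMultiresolutionBisimulation_parallelOrbits {f : A → A} {X : Set A} {g : B → B}
    {κ : A → B} {Rbar : Set (A × B)} (hf : MapsTo f X X) (hg : MapsTo g (κ '' X) (κ '' X))
    (hRbar : ∀ x ∈ X, ∀ k : ℕ, (f^[k] x, g^[k] (κ x)) ∈ Rbar) :
    IsMultiresolutionBisimulation f X g (κ '' X) (parallelOrbits f X g κ) Rbar where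
  subset_prod := by
    rintro _ ⟨x, hx, k, rfl⟩
    exact ⟨hf.iterate k hx, hg.iterate k (mem_image_of_mem κ hx)⟩
  exists_right x hx := ⟨κ x, mem_image_of_mem κ hx, x, hx, 0, rfl⟩
  exists_left := by
    rintro _ ⟨x, hx, rfl⟩
    exact ⟨x, hx, x, hx, 0, rfl⟩
  map_mem := by
    rintro _ ⟨x, hx, k, rfl⟩
    exact ⟨x, hx, k + 1, by simp only [iterate_succ_apply']⟩
  subset_resolution := by
    rintro _ ⟨x, hx, k, rfl⟩
    exact hRbar x hx k

end Bisimulation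

theorem exists_pos_le_of_lowerSemicontinuousOn {T : Type*} [TopologicalSpace T]
    {K : Set T} {g : T → ℝ} (hK : IsCompact K) (hg : LowerSemicontinuousOn g K)
    (hpos : ∀ a ∈ K, 0 < g a) : ∃ e > 0, ∀ a ∈ K, e ≤ g a := by
  rcases K.eq_empty_or_nonempty with rfl | hne
  · exact ⟨1, one_pos, by simp⟩
  · obtain ⟨a, ha, hmin⟩ := hg.exists_isMinOn hne hK
    exact ⟨g a, hpos a ha, fun b hb => hmin hb⟩

theorem IsClassK.tendsto_zero {α : ℝ → ℝ} (hα : IsClassK α) : Tendsto α (𝓝[≥] 0) (𝓝 0) := by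
  simpa only [ContinuousWithinAt, hα.2.2] using hα.1 0 self_mem_Ici

theorem equicontinuousOn_iterate_of_dist_le {E : Type*} [PseudoMetricSpace E] {f : E → E}
    {X : Set E} {α : ℝ → ℝ} (hα : Tendsto α (𝓝[≥] 0) (𝓝 0))
    (hdist : ∀ x ∈ X, ∀ y ∈ X, ∀ k : ℕ, 1 ≤ k → dist (f^[k] x) (f^[k] y) ≤ α (dist x y)) :
    EquicontinuousOn (fun k : ℕ => f^[k]) X := by
  intro x hx U hU
  obtain ⟨η, hη, hηU⟩ := Metric.mem_uniformity_dist.1 hU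
  have hlim : Tendsto (dist x) (𝓝[X] x) (𝓝[≥] 0) := by
    refine tendsto_nhdsWithin_iff.2 ⟨?_, .of_forall fun _ => dist_nonneg⟩
    rw [← dist_self x]
    exact (continuous_const.dist continuous_id).continuousWithinAt
  filter_upwards [self_mem_nhdsWithin, nhdsWithin_le_nhds (Metric.ball_mem_nhds x hη),
    (hα.comp hlim).eventually_lt_const hη] with y hyX hy hαy k
  apply hηU
  rcases Nat.eq_zero_or_pos k with rfl | hk
  · exact Metric.mem_ball'.1 hy
  · exact (hdist x hx y hyX k hk).trans_lt hαy

section OrbitClose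

variable {E : Type*} [PseudoMetricSpace E] {f : E → E} {X : Set E} {a b η : ℝ} {x y z : E}

/-- The orbits of `x` and `y` under `f` stay within distance `η` of each other at all times; the
closed-ball relation of the orbit metric `sup_j d(fʲ(x), fʲ(y))`, for which `f` is nonexpansive. -/
def OrbitClose (f : E → E) (η : ℝ) (x y : E) : Prop :=
  ∀ j : ℕ, dist (f^[j] x) (f^[j] y) ≤ η

namespace OrbitClose

theorem refl (hη : 0 ≤ η) (x : E) : OrbitClose f η x x := fun j => by
  rwa [dist_self]

theorem symm (h : OrbitClose f η x y) : OrbitClose f η y x := fun j => by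
  rw [dist_comm]
  exact h j

theorem trans (hxy : OrbitClose f a x y) (hyz : OrbitClose f b y z) : OrbitClose f (a + b) x z :=
  fun j => (dist_triangle _ _ _).trans (add_le_add (hxy j) (hyz j))

theorem mono (h : OrbitClose f a x y) (hab : a ≤ b) : OrbitClose f b x y :=
  fun j => (h j).trans hab

theorem map (h : OrbitClose f η x y) : OrbitClose f η (f x) (f y) :=
  fun j => h (j + 1)

theorem dist_le (h : OrbitClose f η x y) : dist x y ≤ η := h 0

end OrbitClose

theorem exists_finite_orbitClose_net (hX : IsCompact X)
    (hequi : EquicontinuousOn (fun k : ℕ => f^[k]) X) (hη : 0 < η) :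
    ∃ t ⊆ X, t.Finite ∧ ∀ x ∈ X, ∃ y ∈ t, OrbitClose f η x y := by
  have hnhds : ∀ y ∈ X, {x | OrbitClose f η x y} ∈ 𝓝[X] y := fun y hy => by
    filter_upwards [hequi y hy _ (Metric.dist_mem_uniformity hη)] with x hx j
    rw [dist_comm]
    exact (hx j).le
  obtain ⟨t, htX, hcover⟩ := hX.elim_nhdsWithin_subcover _ hnhds
  refine ⟨t, htX, t.finite_toSet, fun x hx => ?_⟩
  simpa only [mem_iUnion₂, exists_prop, mem_ofPred_eq, SetLike.mem_coe] using hcover hx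

theorem eventually_forall_orbitClose_fixedPt {p : E} (hX : IsCompact X)
    (hequi : EquicontinuousOn (fun k : ℕ => f^[k]) X) (hp : IsFixedPt f p)
    (hattr : ∀ x ∈ X, Tendsto (fun k : ℕ => f^[k] x) atTop (𝓝 p)) (hη : 0 < η) :
    ∀ᶠ k : ℕ in atTop, ∀ x ∈ X, OrbitClose f η (f^[k] x) p := by
  obtain ⟨t, htX, htfin, hnet⟩ := exists_finite_orbitClose_net hX hequi (half_pos hη)
  have hattr_net : ∀ᶠ k : ℕ in atTop, ∀ y ∈ t, dist (f^[k] y) p < η / 2 :=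
    (eventually_all_finite htfin).2 fun y hy =>
      (hattr y (htX hy)).eventually (Metric.ball_mem_nhds p (half_pos hη))
  filter_upwards [eventually_forall_ge_atTop.2 hattr_net] with k hk x hx j
  obtain ⟨y, hyt, hxy⟩ := hnet x hx
  calc dist (f^[j] (f^[k] x)) (f^[j] p)
      = dist (f^[j + k] x) p := by rw [iterate_add_apply, hp.iterate j]
    _ ≤ dist (f^[j + k] x) (f^[j + k] y) + dist (f^[j + k] y) p := dist_triangle _ _ _
    _ ≤ η / 2 + η / 2 := add_le_add (hxy _) (hk _ (Nat.le_add_left k j) y hyt).le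
    _ = η := add_halves η

end OrbitClose

section AbsorbingQuantizer

variable {E : Type*} [PseudoMetricSpace E] {f q : E → E} {X : Set E} {p x y z : E} {c r η : ℝ}
  {N k : ℕ}

open Classical in
/-- The quantizer `q`, modified to send every state whose orbit stays within `r` of the orbit of
`p` to `p`. When `p` is a fixed point, the abstraction can never leave `p` again. -/
noncomputable def absorbingQuantizer (f : E → E) (p : E) (r : ℝ) (q : E → E) (x : E) : E :=
  if OrbitClose f r x p then p else q x

theorem absorbingQuantizer_of_orbitClose (h : OrbitClose f r x p) :
    absorbingQuantizer f p r q x = p := by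
  classical exact if_pos h

theorem absorbingQuantizer_of_not_orbitClose (h : ¬OrbitClose f r x p) :
    absorbingQuantizer f p r q x = q x := by
  classical exact if_neg h

theorem isFiniteQuantizer_absorbingQuantizer {t : Set E} (hp : p ∈ X) (htX : t ⊆ X)
    (ht : t.Finite) (hq : MapsTo q X t) : IsFiniteQuantizer X (absorbingQuantizer f p r q) := by
  have hmaps : MapsTo (absorbingQuantizer f p r q) X (insert p t) := fun x hx => by
    by_cases h : OrbitClose f r x p
    · exact .inl (absorbingQuantizer_of_orbitClose h)
    · exact .inr (absorbingQuantizer_of_not_orbitClose (q := q) h ▸ hq hx)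
  exact ⟨hmaps.mono_right (insert_subset hp htX), (ht.insert p).subset hmaps.image_subset⟩

theorem absorbingQuantizer_orbitClose_or (hxz : OrbitClose f c x z) (hqz : OrbitClose f η z (q z)) :
    (absorbingQuantizer f p r q z = p ∧ OrbitClose f (c + r) x p) ∨
      (¬OrbitClose f r z p ∧ OrbitClose f (c + η) x (absorbingQuantizer f p r q z)) := by
  by_cases hz : OrbitClose f r z p
  · exact .inl ⟨absorbingQuantizer_of_orbitClose hz, hxz.trans hz⟩
  · rw [absorbingQuantizer_of_not_orbitClose hz]
    exact .inr ⟨hz, hxz.trans hqz⟩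

/-- The invariant relating the `k`-th states `x` and `y` of a trajectory and of its abstraction by
the absorbing quantizer: either `y` has been absorbed by `p`, or `k ≤ N` and the error accumulated
so far is at most `η` per quantization, the initial one included. -/
def AbsorbedOrDrifting (f : E → E) (p : E) (r η : ℝ) (N k : ℕ) (x y : E) : Prop :=
  (y = p ∧ OrbitClose f (3 * r) x p) ∨ (k ≤ N ∧ OrbitClose f ((k + 1) * η) x y)

theorem absorbedOrDrifting_zero (hr : 0 ≤ r) (hq : OrbitClose f η x (q x)) :
    AbsorbedOrDrifting f p r η N 0 x (absorbingQuantizer f p (2 * r) q x) := by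
  rcases absorbingQuantizer_orbitClose_or (p := p) (r := 2 * r) (.refl le_rfl x) hq with
    ⟨hκx, hclose⟩ | ⟨-, hclose⟩
  · exact .inl ⟨hκx, hclose.mono (by linarith)⟩
  · exact .inr ⟨N.zero_le, hclose.mono (by simp)⟩

namespace AbsorbedOrDrifting

/-- The absorbing radius `2 * r` is the bound `r` on the drift plus the distance `r` to `p` that
`x` has reached by time `N`, so absorption is forced by then. -/
theorem succ (h : AbsorbedOrDrifting f p r η N k x y) (hp : IsFixedPt f p) (hη : 0 ≤ η)
    (hNη : (N + 1) * η ≤ r) (hq : OrbitClose f η (f y) (q (f y)))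
    (hN : N ≤ k → OrbitClose f r (f x) p) :
    AbsorbedOrDrifting f p r η N (k + 1) (f x) (absorbingQuantizer f p (2 * r) q (f y)) := by
  have hr : 0 ≤ r := (by positivity : 0 ≤ (N + 1) * η).trans hNη
  rcases h with ⟨rfl, hclose⟩ | ⟨hkN, hclose⟩
  · rw [hp.eq, absorbingQuantizer_of_orbitClose (.refl (by positivity) y)]
    exact .inl ⟨rfl, by simpa only [hp.eq] using hclose.map⟩
  · have hdrift : (k + 1) * η ≤ r := le_trans (by gcongr) hNη
    rcases absorbingQuantizer_orbitClose_or (p := p) (r := 2 * r) hclose.map hq with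
      ⟨hκy, hclose'⟩ | ⟨hfar, hclose'⟩
    · exact .inl ⟨hκy, hclose'.mono (by linarith)⟩
    · refine .inr ⟨?_, hclose'.mono (by push_cast; linarith)⟩
      by_contra! hNk
      exact hfar ((hclose.map.symm.trans (hN (Nat.lt_succ_iff.1 hNk))).mono (by linarith))

theorem dist_le (h : AbsorbedOrDrifting f p r η N k x y) (hη : 0 ≤ η) (hNη : (N + 1) * η ≤ r) :
    dist x y ≤ 3 * r := by
  rcases h with ⟨rfl, hclose⟩ | ⟨hkN, hclose⟩
  · exact hclose.dist_le
  · have hr : 0 ≤ r := (by positivity : 0 ≤ (N + 1) * η).trans hNη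
    calc dist x y ≤ (k + 1) * η := hclose.dist_le
      _ ≤ (N + 1) * η := by gcongr
      _ ≤ 3 * r := by linarith

end AbsorbedOrDrifting

theorem absorbedOrDrifting_iterate (hf : MapsTo f X X) (hp : IsFixedPt f p)
    (hκ : MapsTo (absorbingQuantizer f p (2 * r) q) X X)
    (hq : ∀ z ∈ X, OrbitClose f η z (q z)) (hη : 0 ≤ η) (hNη : (N + 1) * η ≤ r)
    (hN : ∀ k ≥ N, ∀ x ∈ X, OrbitClose f r (f^[k] x) p) (hx : x ∈ X) (k : ℕ) :
    AbsorbedOrDrifting f p r η N k (f^[k] x)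
      ((absorbingQuantizer f p (2 * r) q ∘ f)^[k] (absorbingQuantizer f p (2 * r) q x)) := by
  induction k with
  | zero =>
    exact absorbedOrDrifting_zero ((by positivity : 0 ≤ (N + 1) * η).trans hNη) (hq x hx)
  | succ k ih =>
    simp only [iterate_succ_apply', comp_apply]
    refine ih.succ hp hη hNη (hq _ (hf ((hκ.comp hf).iterate k (hκ hx)))) fun hNk => ?_
    rw [← iterate_succ_apply' f k x]
    exact hN (k + 1) (Nat.le_succ_of_le hNk) x hx

end AbsorbingQuantizer

section Attractor

variable {E : Type*} [PseudoMetricSpace E] {f : E → E} {X : Set E} {p : E}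

theorem exists_isFiniteQuantizer_forall_dist_le (hX : IsCompact X) (hf : MapsTo f X X)
    (hequi : EquicontinuousOn (fun k : ℕ => f^[k]) X) (hpX : p ∈ X) (hp : IsFixedPt f p)
    (hattr : ∀ x ∈ X, Tendsto (fun k : ℕ => f^[k] x) atTop (𝓝 p)) {e : ℝ} (he : 0 < e) :
    ∃ κ, IsFiniteQuantizer X κ ∧ ∀ x ∈ X, ∀ k : ℕ, dist (f^[k] x) ((κ ∘ f)^[k] (κ x)) ≤ e := by
  obtain ⟨r, hr, hre⟩ : ∃ r > 0, 3 * r = e := ⟨e / 3, by positivity, by ring⟩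
  obtain ⟨N, hN⟩ := eventually_atTop.1
    (eventually_forall_orbitClose_fixedPt hX hequi hp hattr hr)
  obtain ⟨η, hη, hNη⟩ : ∃ η > 0, (N + 1) * η = r :=
    ⟨r / (N + 1), by positivity, mul_div_cancel₀ r (by positivity)⟩
  obtain ⟨t, htX, ht, hnet⟩ := exists_finite_orbitClose_net hX hequi hη
  choose! q hqt hq using hnet
  have hκ : IsFiniteQuantizer X (absorbingQuantizer f p (2 * r) q) :=
    isFiniteQuantizer_absorbingQuantizer hpX htX ht hqt
  refine ⟨_, hκ, fun x hx k => hre ▸ ?_⟩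
  exact (absorbedOrDrifting_iterate hf hp hκ.mapsTo hq hη.le hNη.le hN hx k).dist_le hη.le hNη.le

theorem stmt7_general (hX : IsCompact X) (hf : MapsTo f X X)
    (hequi : EquicontinuousOn (fun k : ℕ => f^[k]) X) (hpX : p ∈ X) (hp : IsFixedPt f p)
    (hattr : ∀ x ∈ X, Tendsto (fun k : ℕ => f^[k] x) atTop (𝓝 p)) {ε : E → E → ℝ}
    (hεpos : ∀ x ∈ X, ∀ y ∈ X, 0 < ε x y)
    (hεlsc : LowerSemicontinuousOn (fun a : E × E => ε a.1 a.2) (X ×ˢ X)) :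
    ∃ κ R, IsFiniteQuantizer X κ ∧
      IsMultiresolutionBisimulation f X (κ ∘ f) (κ '' X) R {a | dist a.1 a.2 ≤ ε a.1 a.2} := by
  obtain ⟨e, he, heε⟩ := exists_pos_le_of_lowerSemicontinuousOn (hX.prod hX) hεlsc
    fun a ha => hεpos a.1 ha.1 a.2 ha.2
  obtain ⟨κ, hκ, hdist⟩ := exists_isFiniteQuantizer_forall_dist_le hX hf hequi hpX hp hattr he
  have hκf : MapsTo (κ ∘ f) X X := hκ.mapsTo.comp hf
  have hg : MapsTo (κ ∘ f) (κ '' X) (κ '' X) :=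
    (mapsTo_image κ X).comp (hf.mono_left hκ.mapsTo.image_subset)
  refine ⟨κ, _, hκ, isMultiresolutionBisimulation_parallelOrbits hf hg fun x hx k => ?_⟩
  exact (hdist x hx k).trans
    (heε (_, _) ⟨hf.iterate k hx, hκf.iterate k (hκ.mapsTo hx)⟩)

end Attractor

/-- Let `S = (X, X, f)` be a δ-UB system on a compact `X ⊂ ℝⁿ` with an
asymptotically stable equilibrium `x*` whose region of attraction contains `X`.  Then for
every continuous positive resolution function `ε`, with resolution relation
`R̄ = {(x,x̂) ∈ X × X : dist x x̂ ≤ ε x x̂}`, there exist a finite-state deterministic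
abstraction `Ŝ` of `S` and a multi-resolution approximate bisimulation `R` between `S` and
`Ŝ` with resolution `R̄`; i.e. `𝒲_S(R̄) ≠ ∅`. -/
theorem stmt7 (n : ℕ)
    (X : Set (EuclideanSpace ℝ (Fin n)))
    (f : EuclideanSpace ℝ (Fin n) → EuclideanSpace ℝ (Fin n))
    (hXcomp : IsCompact X) (hXne : X.Nonempty) (hf : Set.MapsTo f X X)
    (α : ℝ → ℝ) (hα : IsClassK α)
    (hUB : ∀ x ∈ X, ∀ x' ∈ X, ∀ k : ℕ, 1 ≤ k →
      dist (f^[k] x) (f^[k] x') ≤ α (dist x x'))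
    (xstar : EuclideanSpace ℝ (Fin n)) (hxstar : xstar ∈ X)
    (hfix : f xstar = xstar)
    (hstab : ∀ U ∈ nhds xstar, ∃ V ∈ nhds xstar, ∀ x ∈ V ∩ X, ∀ k : ℕ, f^[k] x ∈ U)
    (hattr : ∀ x ∈ X,
      Filter.Tendsto (fun k : ℕ => f^[k] x) Filter.atTop (nhds xstar))
    (ε : EuclideanSpace ℝ (Fin n) → EuclideanSpace ℝ (Fin n) → ℝ)
    (hεpos : ∀ x ∈ X, ∀ y ∈ X, 0 < ε x y)
    (hεcont : ContinuousOn (fun p : EuclideanSpace ℝ (Fin n) × EuclideanSpace ℝ (Fin n) =>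
      ε p.1 p.2) (X ×ˢ X)) :
    ∃ Xhat : Set (EuclideanSpace ℝ (Fin n)), Xhat ⊆ X ∧ Xhat.Finite ∧
      ∃ κ : EuclideanSpace ℝ (Fin n) → EuclideanSpace ℝ (Fin n),
        (∀ x ∈ X, κ x ∈ Xhat) ∧ (∀ y ∈ Xhat, ∃ x ∈ X, κ x = y) ∧
        ∃ ghat : EuclideanSpace ℝ (Fin n) → EuclideanSpace ℝ (Fin n),
          (∀ y ∈ Xhat, ghat y = κ (f y)) ∧
          ∃ R : Set (EuclideanSpace ℝ (Fin n) × EuclideanSpace ℝ (Fin n)),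
            R ⊆ X ×ˢ Xhat ∧
            (∀ x ∈ X, ∃ y ∈ κ '' X, (x, y) ∈ R) ∧
            (∀ y ∈ κ '' X, ∃ x ∈ X, (x, y) ∈ R) ∧
            (∀ p ∈ R, (f p.1, ghat p.2) ∈ R) ∧
            (∀ p ∈ R, dist p.1 p.2 ≤ ε p.1 p.2) := by
  obtain ⟨κ, R, hκ, hR⟩ := stmt7_general hXcomp hf
    (equicontinuousOn_iterate_of_dist_le hα.tendsto_zero hUB) hxstar hfix hattr hεpos
    hεcont.lowerSemicontinuousOn
  exact ⟨κ '' X, hκ.mapsTo.image_subset, hκ.finite_image, κ, fun _ => mem_image_of_mem κ,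
    fun _ => id, κ ∘ f, fun _ _ => rfl, R, hR.subset_prod, hR.exists_right, hR.exists_left,
    hR.map_mem, hR.subset_resolution⟩
end

section
/- Consider the transition system S = (X, X₀, f) with X = X₀ = [1, ∞) ⊂ ℝ and f(x) = 2x. For every ε > 0, for every countable set X̂ ⊆ X, every map ĝ : X̂ → X̂ and every X̂₀ ⊆ X̂, there is no relation R ⊆ X × X̂ satisfying the three conditions of an ε-approximate bisimulation between S and Ŝ = (X̂, X̂₀, ĝ); that is, 𝒲_S(ε) = ∅ over countable-state abstractions. -/
/-! Two states of the system related to the same abstract state have forward orbits that stay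
within `2ε` of each other, since both are shadowed by one abstract orbit. Doubling separates any two
distinct orbits without bound, so every abstract state represents at most one state of `[1, ∞)`.
A countable set of abstract states therefore cannot represent the uncountable set `[1, ∞)`. -/

open Set Filter
open scoped NNReal Topology

section Expansive

variable {α : Type*}

/-- Positive expansiveness of `f` with constant `δ`, required only for orbits starting in `s`:
the forward orbits of any two distinct points of `s` are at some time more than `δ` apart.
The orbits may leave `s`. -/
def IsPositivelyExpansiveOn [PseudoMetricSpace α] (f : α → α) (s : Set α) (δ : ℝ) : Prop :=
  s.Pairwise fun x y ↦ ∃ n : ℕ, δ < dist (f^[n] x) (f^[n] y)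

theorem antilipschitzWith_iterate [PseudoEMetricSpace α] {f : α → α} {K : ℝ≥0}
    (hf : AntilipschitzWith K f) : ∀ n : ℕ, AntilipschitzWith (K ^ n) f^[n]
  | 0 => by simpa only [pow_zero, Function.iterate_zero] using AntilipschitzWith.id
  | n + 1 => by
    simpa only [pow_succ', Function.iterate_succ] using (antilipschitzWith_iterate hf n).comp hf

theorem isPositivelyExpansiveOn_of_antilipschitzWith [MetricSpace α] {f : α → α} {K : ℝ≥0}
    (hf : AntilipschitzWith K f) (hK : K < 1) (s : Set α) (δ : ℝ) :
    IsPositivelyExpansiveOn f s δ := by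
  intro x _ y _ hxy
  by_contra! hclose
  have hbound (n : ℕ) : dist x y ≤ (K : ℝ) ^ n * δ := calc
    dist x y ≤ (K : ℝ) ^ n * dist (f^[n] x) (f^[n] y) := by
      simpa only [NNReal.coe_pow] using (antilipschitzWith_iterate hf n).le_mul_dist x y
    _ ≤ (K : ℝ) ^ n * δ := by gcongr; exact hclose n
  have hlim : Tendsto (fun n : ℕ ↦ (K : ℝ) ^ n * δ) atTop (𝓝 0) := by
    simpa only [zero_mul] using
      (tendsto_pow_atTop_nhds_zero_of_lt_one K.coe_nonneg hK).mul_const δ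
  exact (dist_pos.2 hxy).not_ge (ge_of_tendsto' hlim hbound)

theorem isPositivelyExpansiveOn_mul_left [NormedDivisionRing α] {a : α} (ha : 1 < ‖a‖)
    (s : Set α) (δ : ℝ) : IsPositivelyExpansiveOn (a * ·) s δ :=
  have ha₀ : a ≠ 0 := norm_pos_iff.1 (one_pos.trans ha)
  isPositivelyExpansiveOn_of_antilipschitzWith (antilipschitzWith_mul_left ha₀)
    (inv_lt_one_of_one_lt₀ ha) s δ

end Expansive

/-- An `ε`-approximate simulation `R` of the system `(f, X₀)` by the system `(g, Y₀)`: the half of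
an `ε`-approximate bisimulation in which initial states are matched only from `X₀` to `Y₀`.
Both systems have the whole of `α` as state space; `R` may relate only part of it. -/
structure IsApproxSimulation {α : Type*} [PseudoMetricSpace α] (f g : α → α) (X₀ Y₀ : Set α)
    (ε : ℝ) (R : Set (α × α)) : Prop where
  exists_mem_init : ∀ x ∈ X₀, ∃ y ∈ Y₀, (x, y) ∈ R
  step_mem : ∀ p ∈ R, (f p.1, g p.2) ∈ R
  dist_le : ∀ p ∈ R, dist p.1 p.2 ≤ ε

namespace IsApproxSimulation

variable {α : Type*} [PseudoMetricSpace α] {f g : α → α} {X₀ Y₀ : Set α} {ε : ℝ}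
  {R : Set (α × α)} {x x' y : α}

theorem iterate_mem (hR : IsApproxSimulation f g X₀ Y₀ ε R) (h : (x, y) ∈ R) (n : ℕ) :
    (f^[n] x, g^[n] y) ∈ R := by
  have hmaps : MapsTo (Prod.map f g) R R := hR.step_mem
  simpa only [Prod.map_iterate, Prod.map_apply] using hmaps.iterate n h

theorem dist_iterate_le (hR : IsApproxSimulation f g X₀ Y₀ ε R) (h : (x, y) ∈ R)
    (h' : (x', y) ∈ R) (n : ℕ) : dist (f^[n] x) (f^[n] x') ≤ 2 * ε := calc
  dist (f^[n] x) (f^[n] x') ≤ dist (f^[n] x) (g^[n] y) + dist (f^[n] x') (g^[n] y) :=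
    dist_triangle_right _ _ _
  _ ≤ ε + ε := add_le_add (hR.dist_le _ (hR.iterate_mem h n)) (hR.dist_le _ (hR.iterate_mem h' n))
  _ = 2 * ε := (two_mul ε).symm

theorem eq_of_mem_of_mem (hR : IsApproxSimulation f g X₀ Y₀ ε R)
    (hf : IsPositivelyExpansiveOn f X₀ (2 * ε)) (hx : x ∈ X₀) (hx' : x' ∈ X₀)
    (h : (x, y) ∈ R) (h' : (x', y) ∈ R) : x = x' := by
  by_contra hne
  obtain ⟨n, hn⟩ := hf hx hx' hne
  exact hn.not_ge (hR.dist_iterate_le h h' n)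

theorem countable_init (hR : IsApproxSimulation f g X₀ Y₀ ε R)
    (hf : IsPositivelyExpansiveOn f X₀ (2 * ε)) (hY₀ : Y₀.Countable) : X₀.Countable := by
  choose! u hu_mem hu_rel using hR.exists_mem_init
  have hu_inj : InjOn u X₀ := fun x hx x' hx' heq ↦
    hR.eq_of_mem_of_mem hf hx hx' (hu_rel x hx) (heq ▸ hu_rel x' hx')
  exact MapsTo.countable_of_injOn hu_mem hu_inj hY₀

end IsApproxSimulation

theorem not_countable_Ici_real (a : ℝ) : ¬ (Ici a).Countable := fun h ↦
  (lt_add_one a).not_ge (Cardinal.Real.Icc_countable_iff.1 (h.mono Icc_subset_Ici_self))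

theorem stmt15_general {α : Type*} [PseudoMetricSpace α] {f g : α → α} {X₀ Y₀ : Set α} {ε : ℝ}
    (hf : IsPositivelyExpansiveOn f X₀ (2 * ε)) (hX₀ : ¬ X₀.Countable) (hY₀ : Y₀.Countable) :
    ¬ ∃ R : Set (α × α), IsApproxSimulation f g X₀ Y₀ ε R :=
  fun ⟨_, hR⟩ ↦ hX₀ (hR.countable_init hf hY₀)

/-- For the system `S = (X, X₀, f)` with `X = X₀ = [1, ∞) ⊂ ℝ` and `f(x) = 2x`,
for every `ε > 0`, every countable `X̂ ⊆ X`, every `ĝ : X̂ → X̂` and every `X̂₀ ⊆ X̂`, there is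
no relation `R ⊆ X × X̂` satisfying the three conditions of an `ε`-approximate bisimulation
between `S` and `Ŝ = (X̂, X̂₀, ĝ)`; i.e. `𝒲_S(ε) = ∅` over countable-state abstractions. -/
theorem stmt15 (ε : ℝ) (hε : 0 < ε)
    (Xhat : Set ℝ) (hXhatX : Xhat ⊆ Set.Ici 1) (hcount : Xhat.Countable)
    (ghat : ℝ → ℝ) (hghat : Set.MapsTo ghat Xhat Xhat)
    (Xhat0 : Set ℝ) (hXhat0 : Xhat0 ⊆ Xhat) :
    ¬ ∃ R : Set (ℝ × ℝ),
        R ⊆ Set.Ici 1 ×ˢ Xhat ∧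
        (∀ x ∈ Set.Ici (1 : ℝ), ∃ y ∈ Xhat0, (x, y) ∈ R) ∧
        (∀ y ∈ Xhat0, ∃ x ∈ Set.Ici (1 : ℝ), (x, y) ∈ R) ∧
        (∀ p ∈ R, (2 * p.1, ghat p.2) ∈ R) ∧
        (∀ p ∈ R, dist p.1 p.2 ≤ ε) := by
  rintro ⟨R, -, hinit, -, hstep, hdist⟩
  exact stmt15_general (isPositivelyExpansiveOn_mul_left (by norm_num) _ _)
    (not_countable_Ici_real 1) (hcount.mono hXhat0) ⟨R, hinit, hstep, hdist⟩
end
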